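/- arXiv:2212.04288 — 5 statements merged into one kernel-verified Lean document; each statement's English description precedes it below -/
import Mathlib

section
/- Let Σ be a real symmetric positive definite n×n matrix with largest eigenvalue λ₁, let M ≥ 1 be a natural number, let σ_y > 0, c > 0, and let μ ≤ M be a real number such that M²·n·λ₁² − M·(M−μ)·λ₁ > 0. If M − μ ≤ c²·M²·Tr(Σ·(c²·M·Σ + σ_y²·I)⁻¹·Σ), then c² ≥ σ_y²·(M−μ) / (M²·n·λ₁² − M·(M−μ)·λ₁). -/
open Matrix

/-! The matrix `A (aA + sI)⁻¹ A` is the function `x ↦ x² / (a x + s)` of `A`. This function is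
increasing on `[0, ∞)`, so the trace is at most `n` times its value at the largest eigenvalue. With
`a = c² M` and `s = σ_y²`, clearing the denominator leaves an inequality that is linear in `c²`. -/

theorem monotoneOn_sq_div_mul_add {a s : ℝ} (ha : 0 ≤ a) (hs : 0 < s) :
    MonotoneOn (fun x : ℝ ↦ x ^ 2 / (a * x + s)) (Set.Ici 0) := by
  intro x (hx : 0 ≤ x) y (hy : 0 ≤ y) hxy
  have hcross : 0 ≤ (a * (x * y) + s * (x + y)) * (y - x) :=
    mul_nonneg (by positivity) (sub_nonneg.2 hxy)
  change x ^ 2 / (a * x + s) ≤ y ^ 2 / (a * y + s)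
  rw [div_le_div_iff₀ (by positivity) (by positivity)]
  linarith

section

open scoped ComplexOrder

variable {ι 𝕜 : Type*} [Fintype ι] [DecidableEq ι] [RCLike 𝕜] {A : Matrix ι ι 𝕜}

theorem trace_cfc_eq_sum_eigenvalues (hA : A.IsHermitian) (f : ℝ → ℝ) :
    (cfc f A).trace = ∑ i, (f (hA.eigenvalues i) : 𝕜) := by
  rw [hA.cfc_eq, IsHermitian.cfc, Unitary.conjStarAlgAut_apply, trace_mul_cycle,
    Unitary.coe_star_mul_self, one_mul, trace_diagonal]
  rfl

theorem mul_inv_smul_add_smul_one_mul_eq_cfc (hA : A.IsHermitian) {a s : ℝ}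
    (hne : ∀ x ∈ spectrum ℝ A, a * x + s ≠ 0) :
    A * (a • A + s • (1 : Matrix ι ι 𝕜))⁻¹ * A = cfc (fun x : ℝ ↦ x ^ 2 / (a * x + s)) A := by
  have hselfAdjoint : IsSelfAdjoint A := hA
  have hcont (f : ℝ → ℝ) : ContinuousOn f (spectrum ℝ A) := finite_real_spectrum.continuousOn f
  have hregularized : cfc (fun x : ℝ ↦ a * x + s) A = a • A + s • (1 : Matrix ι ι 𝕜) := by
    rw [cfc_add_const s (fun x ↦ a * x) A, cfc_const_mul_id a A, Algebra.algebraMap_eq_smul_one]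
  have hinv : (a • A + s • (1 : Matrix ι ι 𝕜))⁻¹ = cfc (fun x : ℝ ↦ (a * x + s)⁻¹) A := by
    rw [cfc_inv (fun x ↦ a * x + s) A hne, hregularized, nonsing_inv_eq_ringInverse]
  calc A * (a • A + s • (1 : Matrix ι ι 𝕜))⁻¹ * A
      = cfc (fun x : ℝ ↦ x) A * cfc (fun x : ℝ ↦ (a * x + s)⁻¹) A * cfc (fun x : ℝ ↦ x) A := by
        rw [hinv, cfc_id' ℝ A]
    _ = cfc (fun x : ℝ ↦ x * (a * x + s)⁻¹ * x) A := by
        rw [← cfc_mul _ _ A (hcont _) (hcont _), ← cfc_mul _ _ A (hcont _) (hcont _)]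
    _ = cfc (fun x : ℝ ↦ x ^ 2 / (a * x + s)) A := by
        congr 1
        ext x
        ring

theorem re_trace_mul_inv_smul_add_smul_one_mul_le (hA : A.PosSemidef) {L : ℝ}
    (hL : ∀ i, hA.1.eigenvalues i ≤ L) {a s : ℝ} (ha : 0 ≤ a) (hs : 0 < s) :
    RCLike.re (A * (a • A + s • (1 : Matrix ι ι 𝕜))⁻¹ * A).trace ≤
      Fintype.card ι * (L ^ 2 / (a * L + s)) := by
  have hne : ∀ x ∈ spectrum ℝ A, a * x + s ≠ 0 := by
    rw [hA.1.spectrum_real_eq_range_eigenvalues, Set.forall_mem_range]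
    intro i
    have := hA.eigenvalues_nonneg i
    positivity
  calc RCLike.re (A * (a • A + s • (1 : Matrix ι ι 𝕜))⁻¹ * A).trace
      = ∑ i, hA.1.eigenvalues i ^ 2 / (a * hA.1.eigenvalues i + s) := by
        rw [mul_inv_smul_add_smul_one_mul_eq_cfc hA.1 hne, trace_cfc_eq_sum_eigenvalues hA.1,
          ← RCLike.ofReal_sum, RCLike.ofReal_re]
    _ ≤ ∑ _i : ι, L ^ 2 / (a * L + s) :=
        Finset.sum_le_sum fun i _ ↦ monotoneOn_sq_div_mul_add ha hs (hA.eigenvalues_nonneg i)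
          ((hA.eigenvalues_nonneg i).trans (hL i)) (hL i)
    _ = Fintype.card ι * (L ^ 2 / (a * L + s)) := by
        rw [Finset.sum_const, Finset.card_univ, nsmul_eq_mul]

theorem stmt0_general [Nonempty ι] (hA : A.PosSemidef) {L : ℝ}
    (hL : ∀ i, hA.1.eigenvalues i ≤ L) {M σy c μ : ℝ} (hM : 0 ≤ M) (hσy : σy ≠ 0)
    (hden : 0 < M ^ 2 * Fintype.card ι * L ^ 2 - M * (M - μ) * L)
    (hreq : M - μ ≤ c ^ 2 * M ^ 2 *
      RCLike.re (A * ((c ^ 2 * M) • A + σy ^ 2 • (1 : Matrix ι ι 𝕜))⁻¹ * A).trace) :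
    σy ^ 2 * (M - μ) / (M ^ 2 * Fintype.card ι * L ^ 2 - M * (M - μ) * L) ≤ c ^ 2 := by
  have hL₀ : 0 ≤ L := (hA.eigenvalues_nonneg (Classical.arbitrary ι)).trans (hL _)
  have hbound : M - μ ≤
      c ^ 2 * M ^ 2 * (Fintype.card ι * (L ^ 2 / (c ^ 2 * M * L + σy ^ 2))) :=
    hreq.trans <| mul_le_mul_of_nonneg_left
      (re_trace_mul_inv_smul_add_smul_one_mul_le hA hL (by positivity) (by positivity))
      (by positivity)
  have hcleared : (M - μ) * (c ^ 2 * M * L + σy ^ 2) ≤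
      c ^ 2 * M ^ 2 * (Fintype.card ι * L ^ 2) := by
    rwa [← mul_div_assoc, ← mul_div_assoc, le_div_iff₀ (by positivity)] at hbound
  rw [div_le_iff₀ hden]
  linarith

end

/-- necessity part of Theorem 2: a minimum MSE requirement `μ ≤ M` at the
legitimate receiver forces a lower bound on the squared signal scaling factor `c²`.
Here `S` plays the role of the covariance matrix Σ and `lam1` of its largest eigenvalue λ₁. -/
theorem stmt0 {n : ℕ} (hn : 1 ≤ n) (S : Matrix (Fin n) (Fin n) ℝ)
    (hS : S.PosDef) (lam1 : ℝ)
    (hmax : ∀ i, hS.1.eigenvalues i ≤ lam1)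
    (hatt : ∃ i, hS.1.eigenvalues i = lam1)
    (M : ℕ) (hM : 1 ≤ M) (σy c μ : ℝ) (hσy : 0 < σy) (hc : 0 < c)
    (hμ : μ ≤ (M : ℝ))
    (hden : 0 < (M : ℝ) ^ 2 * n * lam1 ^ 2 - (M : ℝ) * ((M : ℝ) - μ) * lam1)
    (hreq : (M : ℝ) - μ ≤
      c ^ 2 * (M : ℝ) ^ 2 *
        (S * ((c ^ 2 * (M : ℝ)) • S + σy ^ 2 • (1 : Matrix (Fin n) (Fin n) ℝ))⁻¹ * S).trace) :
    c ^ 2 ≥ σy ^ 2 * ((M : ℝ) - μ) /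
      ((M : ℝ) ^ 2 * n * lam1 ^ 2 - (M : ℝ) * ((M : ℝ) - μ) * lam1) := by
  have : Nonempty (Fin n) := hatt.nonempty
  simpa using stmt0_general hS.posSemidef hmax M.cast_nonneg hσy.ne' (by simpa using hden) hreq
end

section
/- Let Σ be a real symmetric positive semidefinite n×n matrix, let M ≥ 1 be a natural number and σ > 0. Then the map t ↦ t·M²·Tr(Σ·(t·M·Σ + σ²·I)⁻¹·Σ) is monotonically nondecreasing on [0,∞). Consequently, for any real numbers c, h₁, P with 0 ≤ c² ≤ h₁²·P, one has M − c²·M²·Tr(Σ·(c²·M·Σ + σ²·I)⁻¹·Σ) ≥ M − h₁²·P·M²·Tr(Σ·(h₁²·P·M·Σ + σ²·I)⁻¹·Σ). -/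
/-!
Put `P = sA + B` and `Q = tA + B`. From `tP - sQ = (t - s)B` one gets
`tQ⁻¹ - sP⁻¹ = (t - s) Q⁻¹BP⁻¹ = (t - s) (PB⁻¹Q)⁻¹`, and
`PB⁻¹Q = st AB⁻¹A + (s + t)A + B` is positive definite whenever `A ≥ 0`, `B > 0` and `s, t ≥ 0`.
Hence `t ↦ t(tA + B)⁻¹` is nondecreasing in the Loewner order, and the traces of the matrices
`t Cᴴ(tA + B)⁻¹C` inherit this.
-/

open Matrix

section Identities

variable {ι R : Type*} [Fintype ι] [DecidableEq ι] [CommRing R] (A : Matrix ι ι R)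
  {B : Matrix ι ι R}

lemma smul_add_mul_inv_mul_smul_add (hB : IsUnit B) (s t : R) :
    (s • A + B) * B⁻¹ * (t • A + B) = (s * t) • (A * B⁻¹ * A) + (s + t) • A + B := by
  have hdet : IsUnit B.det := (isUnit_iff_isUnit_det B).1 hB
  calc (s • A + B) * B⁻¹ * (t • A + B) = (s • (A * B⁻¹) + 1) * (t • A + B) := by
        rw [Matrix.add_mul, Matrix.smul_mul, mul_nonsing_inv B hdet]
    _ = (s * t) • (A * B⁻¹ * A) + s • A + (t • A + B) := by
        rw [Matrix.add_mul, Matrix.one_mul, Matrix.mul_add, Matrix.smul_mul, Matrix.smul_mul,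
          Matrix.mul_smul, smul_smul, nonsing_inv_mul_cancel_right B A hdet]
    _ = (s * t) • (A * B⁻¹ * A) + (s + t) • A + B := by module

lemma smul_inv_sub_smul_inv (hB : IsUnit B) {s t : R} (hs : IsUnit (s • A + B))
    (ht : IsUnit (t • A + B)) :
    t • (t • A + B)⁻¹ - s • (s • A + B)⁻¹ =
      (t - s) • ((s • A + B) * B⁻¹ * (t • A + B))⁻¹ := by
  have hdiff : t • (s • A + B) - s • (t • A + B) = (t - s) • B := by module
  rw [isUnit_iff_isUnit_det] at hB hs ht
  set P := s • A + B
  set Q := t • A + B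
  calc t • Q⁻¹ - s • P⁻¹ = Q⁻¹ * (t • P - s • Q) * P⁻¹ := by
        rw [Matrix.mul_sub, Matrix.sub_mul, Matrix.mul_smul, Matrix.mul_smul, Matrix.smul_mul,
          Matrix.smul_mul, mul_nonsing_inv_cancel_right P Q⁻¹ hs, nonsing_inv_mul Q ht,
          Matrix.one_mul]
    _ = (t - s) • (P * B⁻¹ * Q)⁻¹ := by
        rw [hdiff, Matrix.mul_smul, Matrix.smul_mul, Matrix.mul_inv_rev, Matrix.mul_inv_rev,
          nonsing_inv_nonsing_inv B hB, Matrix.mul_assoc]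

end Identities

section Monotonicity

variable {ι κ K : Type*} [Field K] [PartialOrder K] [StarRing K] [StarOrderedRing K]
  {A B : Matrix ι ι K}

lemma posDef_smul_add (hA : A.PosSemidef) (hB : B.PosDef) {t : K} (ht : 0 ≤ t) :
    (t • A + B).PosDef :=
  PosDef.posSemidef_add (hA.smul ht) hB

variable [Fintype ι] [DecidableEq ι] [Fintype κ]

lemma posDef_smul_add_mul_inv_mul_smul_add (hA : A.PosSemidef) (hB : B.PosDef) {s t : K}
    (hs : 0 ≤ s) (ht : 0 ≤ t) : ((s • A + B) * B⁻¹ * (t • A + B)).PosDef := by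
  have hABA : (A * B⁻¹ * A).PosSemidef := by
    simpa only [hA.isHermitian.eq] using hB.inv.posSemidef.conjTranspose_mul_mul_same A
  rw [smul_add_mul_inv_mul_smul_add A hB.isUnit]
  exact PosDef.posSemidef_add
    ((hABA.smul (mul_nonneg hs ht)).add (hA.smul (add_nonneg hs ht))) hB

lemma posSemidef_smul_inv_sub_smul_inv (hA : A.PosSemidef) (hB : B.PosDef) {s t : K}
    (hs : 0 ≤ s) (hst : s ≤ t) :
    (t • (t • A + B)⁻¹ - s • (s • A + B)⁻¹).PosSemidef := by
  have ht : 0 ≤ t := hs.trans hst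
  rw [smul_inv_sub_smul_inv A hB.isUnit (posDef_smul_add hA hB hs).isUnit
    (posDef_smul_add hA hB ht).isUnit]
  exact (posDef_smul_add_mul_inv_mul_smul_add hA hB hs ht).inv.posSemidef.smul
    (sub_nonneg.2 hst)

lemma monotoneOn_mul_trace_conjTranspose_mul_inv_mul (hA : A.PosSemidef) (hB : B.PosDef)
    (C : Matrix ι κ K) :
    MonotoneOn (fun t : K => t * (Cᴴ * (t • A + B)⁻¹ * C).trace) (Set.Ici 0) := by
  intro s hs t _ hst
  have htrace :=
    ((posSemidef_smul_inv_sub_smul_inv hA hB hs hst).conjTranspose_mul_mul_same C).trace_nonneg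
  simpa only [Matrix.mul_sub, Matrix.sub_mul, Matrix.mul_smul, Matrix.smul_mul, trace_sub,
    trace_smul, smul_eq_mul, sub_nonneg] using htrace

theorem stmt5_general (hA : A.PosSemidef) (hB : B.PosDef) (C : Matrix ι κ K) {m : K}
    (hm : 0 ≤ m) :
    MonotoneOn (fun t : K => t * m ^ 2 * (Cᴴ * ((t * m) • A + B)⁻¹ * C).trace)
      (Set.Ici 0) := by
  intro s hs t ht hst
  have hscaled := monotoneOn_mul_trace_conjTranspose_mul_inv_mul hA hB C
    (mul_nonneg hs hm) (mul_nonneg ht hm) (mul_le_mul_of_nonneg_right hst hm)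
  convert! mul_le_mul_of_nonneg_left hscaled hm using 1 <;> ring

end Monotonicity

/-- feasibility restriction on the QoS requirement: the map
`t ↦ t·M²·Tr(S·(t·M·S + σ²·I)⁻¹·S)` is monotonically nondecreasing on `[0,∞)`; consequently,
for `0 ≤ c² ≤ h₁²·P` the approximation level at scaling `c` is at least the one at `c² = h₁²·P`. -/
theorem stmt5 {n : ℕ} (S : Matrix (Fin n) (Fin n) ℝ) (hS : S.PosSemidef)
    (M : ℕ) (hM : 1 ≤ M) (σ : ℝ) (hσ : 0 < σ) :
    MonotoneOn
        (fun t : ℝ => t * (M : ℝ) ^ 2 *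
          (S * ((t * (M : ℝ)) • S + σ ^ 2 • (1 : Matrix (Fin n) (Fin n) ℝ))⁻¹ * S).trace)
        (Set.Ici (0 : ℝ)) ∧
      ∀ c h1 P : ℝ, 0 ≤ c ^ 2 → c ^ 2 ≤ h1 ^ 2 * P →
        (M : ℝ) - c ^ 2 * (M : ℝ) ^ 2 *
            (S * ((c ^ 2 * (M : ℝ)) • S + σ ^ 2 • (1 : Matrix (Fin n) (Fin n) ℝ))⁻¹ * S).trace ≥
          (M : ℝ) - h1 ^ 2 * P * (M : ℝ) ^ 2 *
            (S * ((h1 ^ 2 * P * (M : ℝ)) • S + σ ^ 2 • (1 : Matrix (Fin n) (Fin n) ℝ))⁻¹ *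
              S).trace := by
  have hmono := by
    simpa only [hS.isHermitian.eq] using
      stmt5_general hS (PosDef.one.smul (sq_pos_of_pos hσ)) S M.cast_nonneg
  exact ⟨hmono, fun c h1 P h0 hle => sub_le_sub_left (hmono h0 (h0.trans hle) hle) _⟩
end

section
/- Let γ₁, …, γ_M : Ω → ℝⁿ be independent, identically distributed, centered, square-integrable random vectors on a probability space (Ω, F, P) with common covariance matrix Σ = E[γ_m·γ_mᵀ] satisfying Tr(Σ) = 1, and let n_y : Ω → ℝⁿ be a centered square-integrable random vector with E[n_y·n_yᵀ] = σ_y²·I (σ_y > 0), independent of (γ₁, …, γ_M). Let c > 0, s = ∑_{m=1}^{M} γ_m, y = c·s + n_y, and K = c·M·Σ·(c²·M·Σ + σ_y²·I)⁻¹. Then E[‖K·y − s‖²] = M − c²·M²·Tr(Σ·(c²·M·Σ + σ_y²·I)⁻¹·Σ). -/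
open MeasureTheory ProbabilityTheory Matrix

/-!
The estimator `K` solves the normal equations `K E[y yᵀ] = E[s yᵀ]`, so the error `K y - s` is
orthogonal to `y` and its second moment has trace `Tr(E[s sᵀ] - K E[y sᵀ])`. Independence gives
`E[s sᵀ] = M S`, `E[s yᵀ] = c M S` and `E[y yᵀ] = c² M S + σ² I`; the last of these is positive
definite because of the noise, so the normal equations can be solved by inversion.
-/

section CrossMoment

variable {Ω ι κ : Type*} [MeasurableSpace Ω] {P : Measure Ω}

/-- The matrix `E[X Yᵀ]` of mixed second moments of two random vectors. It is not centered, so it is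
the cross-covariance matrix only when `X` or `Y` has mean zero. Entries whose integrand is not
integrable are `0`. -/
noncomputable def crossMoment (P : Measure Ω) (X : Ω → ι → ℝ) (Y : Ω → κ → ℝ) : Matrix ι κ ℝ :=
  of fun i j => ∫ ω, X ω i * Y ω j ∂P

lemma crossMoment_apply (X : Ω → ι → ℝ) (Y : Ω → κ → ℝ) (i : ι) (j : κ) :
    crossMoment P X Y i j = ∫ ω, X ω i * Y ω j ∂P :=
  rfl

lemma transpose_crossMoment (X : Ω → ι → ℝ) (Y : Ω → κ → ℝ) :
    (crossMoment P X Y)ᵀ = crossMoment P Y X := by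
  ext i j
  simp only [transpose_apply, crossMoment_apply, mul_comm]

lemma crossMoment_smul_left (c : ℝ) (X : Ω → ι → ℝ) (Y : Ω → κ → ℝ) :
    crossMoment P (c • X) Y = c • crossMoment P X Y := by
  ext i j
  simp only [crossMoment_apply, Matrix.smul_apply, Pi.smul_apply, smul_eq_mul, mul_assoc,
    integral_const_mul]

lemma crossMoment_smul_right (c : ℝ) (X : Ω → ι → ℝ) (Y : Ω → κ → ℝ) :
    crossMoment P X (c • Y) = c • crossMoment P X Y := by
  rw [← transpose_crossMoment, crossMoment_smul_left, transpose_smul, transpose_crossMoment]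

lemma crossMoment_eq_zero_of_indepFun {X : Ω → ι → ℝ} {Y : Ω → κ → ℝ} (hXY : IndepFun X Y P)
    (hX : AEStronglyMeasurable X P) (hY : AEStronglyMeasurable Y P)
    (hcent : ∀ i, ∫ ω, X ω i ∂P = 0) : crossMoment P X Y = 0 := by
  ext i j
  have hij : IndepFun (fun ω => X ω i) (fun ω => Y ω j) P :=
    hXY.comp (measurable_pi_apply i) (measurable_pi_apply j)
  rw [crossMoment_apply, hij.integral_fun_mul_eq_mul_integral
    ((continuous_apply i).comp_aestronglyMeasurable hX)
    ((continuous_apply j).comp_aestronglyMeasurable hY), hcent, zero_mul, Matrix.zero_apply]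

variable [Fintype ι] [Fintype κ]

lemma integrable_apply_mul_apply {X : Ω → ι → ℝ} {Y : Ω → κ → ℝ} (hX : MemLp X 2 P)
    (hY : MemLp Y 2 P) (i : ι) (j : κ) : Integrable (fun ω => X ω i * Y ω j) P :=
  (memLp_pi_iff.1 hX i).integrable_mul (memLp_pi_iff.1 hY j)

lemma crossMoment_add_left {X X' : Ω → ι → ℝ} {Y : Ω → κ → ℝ} (hX : MemLp X 2 P)
    (hX' : MemLp X' 2 P) (hY : MemLp Y 2 P) :
    crossMoment P (X + X') Y = crossMoment P X Y + crossMoment P X' Y := by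
  ext i j
  simp only [crossMoment_apply, Matrix.add_apply, Pi.add_apply, add_mul]
  exact integral_add (integrable_apply_mul_apply hX hY i j) (integrable_apply_mul_apply hX' hY i j)

lemma crossMoment_add_right {X : Ω → ι → ℝ} {Y Y' : Ω → κ → ℝ} (hX : MemLp X 2 P)
    (hY : MemLp Y 2 P) (hY' : MemLp Y' 2 P) :
    crossMoment P X (Y + Y') = crossMoment P X Y + crossMoment P X Y' := by
  rw [← transpose_crossMoment, crossMoment_add_left hY hY' hX, transpose_add,
    transpose_crossMoment, transpose_crossMoment]

lemma crossMoment_sub_left {X X' : Ω → ι → ℝ} {Y : Ω → κ → ℝ} (hX : MemLp X 2 P)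
    (hX' : MemLp X' 2 P) (hY : MemLp Y 2 P) :
    crossMoment P (X - X') Y = crossMoment P X Y - crossMoment P X' Y := by
  have hneg : MemLp ((-1 : ℝ) • X') 2 P := hX'.const_smul _
  rw [sub_eq_add_neg, ← neg_one_smul ℝ X', crossMoment_add_left hX hneg hY,
    crossMoment_smul_left, neg_one_smul, ← sub_eq_add_neg]

lemma crossMoment_sub_right {X : Ω → ι → ℝ} {Y Y' : Ω → κ → ℝ} (hX : MemLp X 2 P)
    (hY : MemLp Y 2 P) (hY' : MemLp Y' 2 P) :
    crossMoment P X (Y - Y') = crossMoment P X Y - crossMoment P X Y' := by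
  rw [← transpose_crossMoment, crossMoment_sub_left hY hY' hX, transpose_sub,
    transpose_crossMoment, transpose_crossMoment]

lemma crossMoment_sum_left {τ : Type*} (t : Finset τ) {X : τ → Ω → ι → ℝ} {Y : Ω → κ → ℝ}
    (hX : ∀ m, MemLp (X m) 2 P) (hY : MemLp Y 2 P) :
    crossMoment P (∑ m ∈ t, X m) Y = ∑ m ∈ t, crossMoment P (X m) Y := by
  ext i j
  simp only [crossMoment_apply, Matrix.sum_apply, Finset.sum_apply, Finset.sum_mul]
  exact integral_finsetSum t fun m _ => integrable_apply_mul_apply (hX m) hY i j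

lemma crossMoment_sum_right {τ : Type*} (t : Finset τ) {X : Ω → ι → ℝ} {Y : τ → Ω → κ → ℝ}
    (hX : MemLp X 2 P) (hY : ∀ m, MemLp (Y m) 2 P) :
    crossMoment P X (∑ m ∈ t, Y m) = ∑ m ∈ t, crossMoment P X (Y m) := by
  rw [← transpose_crossMoment, crossMoment_sum_left t hY hX, transpose_sum]
  simp only [transpose_crossMoment]

lemma memLp_mulVec {τ : Type*} [Fintype τ] (A : Matrix τ ι ℝ) {X : Ω → ι → ℝ}
    (hX : MemLp X 2 P) : MemLp (fun ω => A *ᵥ X ω) 2 P :=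
  memLp_pi_iff.2 fun t =>
    memLp_finsetSum _ fun i _ => (memLp_pi_iff.1 hX i).const_mul (A t i)

lemma crossMoment_mulVec_left {τ : Type*} (A : Matrix τ ι ℝ) {X : Ω → ι → ℝ} {Y : Ω → κ → ℝ}
    (hX : MemLp X 2 P) (hY : MemLp Y 2 P) :
    crossMoment P (fun ω => A *ᵥ X ω) Y = A * crossMoment P X Y := by
  ext t j
  simp only [crossMoment_apply, mul_apply, mulVec, dotProduct, Finset.sum_mul, mul_assoc]
  rw [integral_finsetSum _ fun i _ => (integrable_apply_mul_apply hX hY i j).const_mul (A t i)]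
  simp only [integral_const_mul]

lemma crossMoment_mulVec_right {τ : Type*} (A : Matrix τ κ ℝ) {X : Ω → ι → ℝ}
    {Y : Ω → κ → ℝ} (hX : MemLp X 2 P) (hY : MemLp Y 2 P) :
    crossMoment P X (fun ω => A *ᵥ Y ω) = crossMoment P X Y * Aᵀ := by
  rw [← transpose_crossMoment, crossMoment_mulVec_left A hY hX, transpose_mul,
    transpose_crossMoment]

lemma integral_sum_sq_eq_trace_crossMoment {X : Ω → ι → ℝ} (hX : MemLp X 2 P) :
    ∫ ω, ∑ i, X ω i ^ 2 ∂P = (crossMoment P X X).trace := by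
  simp only [sq, trace, diag_apply, crossMoment_apply]
  exact integral_finsetSum _ fun i _ => integrable_apply_mul_apply hX hX i i

lemma posSemidef_crossMoment_self {X : Ω → ι → ℝ} (hX : MemLp X 2 P) :
    (crossMoment P X X).PosSemidef := by
  have hcoord (i : ι) : MemLp (fun ω => X ω i) 2 P := memLp_pi_iff.1 hX i
  have hgram : crossMoment P X X = gram ℝ fun i => (hcoord i).toLp := by
    ext i j
    rw [crossMoment_apply, gram_apply, L2.inner_def]
    refine integral_congr_ae ?_
    filter_upwards [(hcoord i).coeFn_toLp, (hcoord j).coeFn_toLp] with ω hi hj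
    rw [hi, hj, RCLike.inner_apply', conj_trivial]
  rw [hgram]
  exact posSemidef_gram ℝ _

lemma crossMoment_sum_self_of_pairwise_orthogonal {τ : Type*} [Fintype τ] {X : τ → Ω → ι → ℝ}
    (hX : ∀ m, MemLp (X m) 2 P) (horth : Pairwise fun m m' => crossMoment P (X m) (X m') = 0) :
    crossMoment P (∑ m, X m) (∑ m, X m) = ∑ m, crossMoment P (X m) (X m) := by
  have hsum : MemLp (∑ m, X m) 2 P := memLp_finsetSum' _ fun m _ => hX m
  rw [crossMoment_sum_left _ hX hsum]
  refine Finset.sum_congr rfl fun m _ => ?_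
  rw [crossMoment_sum_right _ (hX m) hX]
  exact Fintype.sum_eq_single m fun m' hm' => horth hm'.symm

end CrossMoment

section LinearEstimation

variable {Ω ι κ : Type*} [MeasurableSpace Ω] {P : Measure Ω} [Fintype ι] [Fintype κ]

lemma crossMoment_smul_add_right_of_orthogonal {s ν : Ω → ι → ℝ} (hs : MemLp s 2 P)
    (hν : MemLp ν 2 P) (hsν : crossMoment P s ν = 0) (c : ℝ) :
    crossMoment P s (c • s + ν) = c • crossMoment P s s := by
  rw [crossMoment_add_right hs (hs.const_smul c) hν, crossMoment_smul_right, hsν, add_zero]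

lemma crossMoment_smul_add_self_of_orthogonal {s ν : Ω → ι → ℝ} (hs : MemLp s 2 P)
    (hν : MemLp ν 2 P) (hsν : crossMoment P s ν = 0) (c : ℝ) :
    crossMoment P (c • s + ν) (c • s + ν) = c ^ 2 • crossMoment P s s + crossMoment P ν ν := by
  have hcs : MemLp (c • s) 2 P := hs.const_smul c
  have hνs : crossMoment P ν s = 0 := by rw [← transpose_crossMoment, hsν, transpose_zero]
  rw [crossMoment_add_left hcs hν (hcs.add hν), crossMoment_smul_left,
    crossMoment_smul_add_right_of_orthogonal hs hν hsν, crossMoment_add_right hν hcs hν,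
    crossMoment_smul_right, hνs, smul_zero, zero_add, smul_smul, sq]

theorem integral_sum_sq_mulVec_sub_of_normal_equations {s : Ω → ι → ℝ} {y : Ω → κ → ℝ}
    (hs : MemLp s 2 P) (hy : MemLp y 2 P) {K : Matrix ι κ ℝ}
    (hK : K * crossMoment P y y = crossMoment P s y) :
    ∫ ω, ∑ i, ((K *ᵥ y ω) i - s ω i) ^ 2 ∂P =
      (crossMoment P s s).trace - (K * crossMoment P y s).trace := by
  let e : Ω → ι → ℝ := (fun ω => K *ᵥ y ω) - s
  have hKy : MemLp (fun ω => K *ᵥ y ω) 2 P := memLp_mulVec K hy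
  have he : MemLp e 2 P := hKy.sub hs
  have error_orthogonal : crossMoment P e y = 0 := by
    rw [crossMoment_sub_left hKy hs hy, crossMoment_mulVec_left K hy hy, hK, sub_self]
  calc ∫ ω, ∑ i, ((K *ᵥ y ω) i - s ω i) ^ 2 ∂P
      = (crossMoment P e e).trace := integral_sum_sq_eq_trace_crossMoment he
    _ = (-crossMoment P e s).trace := by
        rw [crossMoment_sub_right he hKy hs, crossMoment_mulVec_right K he hy, error_orthogonal,
          Matrix.zero_mul, zero_sub]
    _ = (crossMoment P s s).trace - (K * crossMoment P y s).trace := by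
        rw [crossMoment_sub_left hKy hs hs, crossMoment_mulVec_left K hy hs, neg_sub, trace_sub]

theorem integral_sum_sq_mulVec_sub_of_orthogonal_noise [DecidableEq ι] {s ν : Ω → ι → ℝ}
    (hs : MemLp s 2 P) (hν : MemLp ν 2 P) (hsν : crossMoment P s ν = 0) {R N : Matrix ι ι ℝ}
    (hR : crossMoment P s s = R) (hN : crossMoment P ν ν = N) (hNpos : N.PosDef) (c : ℝ) :
    ∫ ω, ∑ i, (((c • (R * (c ^ 2 • R + N)⁻¹)) *ᵥ (c • s + ν) ω) i - s ω i) ^ 2 ∂P =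
      R.trace - c ^ 2 * (R * (c ^ 2 • R + N)⁻¹ * R).trace := by
  set B := c ^ 2 • R + N
  have hy : MemLp (c • s + ν) 2 P := (hs.const_smul c).add hν
  have hsy : crossMoment P s (c • s + ν) = c • R := by
    rw [crossMoment_smul_add_right_of_orthogonal hs hν hsν, hR]
  have hys : crossMoment P (c • s + ν) s = c • R := by
    rw [← transpose_crossMoment, hsy, transpose_smul, ← hR, transpose_crossMoment]
  have hyy : crossMoment P (c • s + ν) (c • s + ν) = B := by
    rw [crossMoment_smul_add_self_of_orthogonal hs hν hsν, hR, hN]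
  have hBpos : B.PosDef :=
    PosDef.posSemidef_add ((hR ▸ posSemidef_crossMoment_self hs).smul (sq_nonneg c)) hNpos
  have normal_equations : c • (R * B⁻¹) * B = c • R := by
    rw [Matrix.smul_mul, nonsing_inv_mul_cancel_right _ _ hBpos.det_pos.ne'.isUnit]
  rw [integral_sum_sq_mulVec_sub_of_normal_equations hs hy (by rw [hyy, hsy, normal_equations]),
    hR, hys, Matrix.smul_mul, Matrix.mul_smul, smul_smul, ← sq, trace_smul, smul_eq_mul]

end LinearEstimation

theorem stmt8_general {Ω ι τ : Type*} [MeasurableSpace Ω] [Fintype ι] [DecidableEq ι] [Fintype τ]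
    (P : Measure Ω) (γ : τ → Ω → ι → ℝ) (hγ : ∀ m, MemLp (γ m) 2 P)
    (hγorth : Pairwise fun m m' => crossMoment P (γ m) (γ m') = 0)
    (S : Matrix ι ι ℝ) (hγcov : ∀ m, crossMoment P (γ m) (γ m) = S)
    (ν : Ω → ι → ℝ) (hν : MemLp ν 2 P) (N : Matrix ι ι ℝ)
    (hνcov : crossMoment P ν ν = N) (hN : N.PosDef)
    (hγν : ∀ m, crossMoment P (γ m) ν = 0)
    (c : ℝ) (s y : Ω → ι → ℝ) (hs : s = ∑ m, γ m) (hy : y = c • s + ν)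
    (K : Matrix ι ι ℝ) (hK : K = (c * (Fintype.card τ : ℝ)) •
      (S * ((c ^ 2 * (Fintype.card τ : ℝ)) • S + N)⁻¹)) :
    ∫ ω, ∑ i, ((K *ᵥ y ω) i - s ω i) ^ 2 ∂P =
      (Fintype.card τ : ℝ) * S.trace - c ^ 2 * (Fintype.card τ : ℝ) ^ 2 *
        (S * ((c ^ 2 * (Fintype.card τ : ℝ)) • S + N)⁻¹ * S).trace := by
  have hsL2 : MemLp s 2 P := hs ▸ memLp_finsetSum' _ fun m _ => hγ m
  have hsν : crossMoment P s ν = 0 := by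
    rw [hs, crossMoment_sum_left _ hγ hν]
    exact Finset.sum_eq_zero fun m _ => hγν m
  have hss : crossMoment P s s = (Fintype.card τ : ℝ) • S := by
    rw [hs, crossMoment_sum_self_of_pairwise_orthogonal hγ hγorth]
    simp only [hγcov, Finset.sum_const, Finset.card_univ, Nat.cast_smul_eq_nsmul]
  have hmse := integral_sum_sq_mulVec_sub_of_orthogonal_noise hsL2 hν hsν hss hνcov hN c
  simp only [Matrix.smul_mul, Matrix.mul_smul, smul_smul, trace_smul, smul_eq_mul] at hmse
  rw [hK, hy, hmse]
  ring

/-- achievability / MSE-approximation part of Theorem 1: the linear estimator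
`d_y(y) = K·y` with `K = c·M·S·(c²·M·S + σ_y²·I)⁻¹` applied to the legitimate receiver's
observation `y = c·s + n_y`, where `s = ∑ m, γ m`, achieves mean squared error exactly
`M − c²·M²·Tr(S·(c²·M·S + σ_y²·I)⁻¹·S)`. -/
theorem stmt8 {Ω : Type*} [MeasurableSpace Ω] (P : Measure Ω) [IsProbabilityMeasure P]
    {n M : ℕ} (hn : 1 ≤ n) (hM : 1 ≤ M)
    (γ : Fin M → Ω → Fin n → ℝ) (hγmeas : ∀ m, Measurable (γ m))
    (hγL2 : ∀ m, MemLp (γ m) 2 P)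
    (hγindep : iIndepFun (m := fun _ : Fin M => (inferInstance : MeasurableSpace (Fin n → ℝ))) γ P)
    (hγident : ∀ m m', IdentDistrib (γ m) (γ m') P P)
    (hγcent : ∀ m i, ∫ ω, γ m ω i ∂P = 0)
    (S : Matrix (Fin n) (Fin n) ℝ) (hScov : ∀ m i j, S i j = ∫ ω, γ m ω i * γ m ω j ∂P)
    (htr : S.trace = 1)
    (σy : ℝ) (hσy : 0 < σy)
    (ny : Ω → Fin n → ℝ) (hnymeas : Measurable ny) (hnyL2 : MemLp ny 2 P)
    (hnycent : ∀ i, ∫ ω, ny ω i ∂P = 0)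
    (hnycov : ∀ i j, (∫ ω, ny ω i * ny ω j ∂P) = σy ^ 2 * (if i = j then 1 else 0))
    (hnyindep : IndepFun (fun ω m => γ m ω) ny P)
    (c : ℝ) (hc : 0 < c)
    (s y : Ω → Fin n → ℝ) (hs : ∀ ω, s ω = ∑ m, γ m ω) (hy : ∀ ω, y ω = c • s ω + ny ω)
    (K : Matrix (Fin n) (Fin n) ℝ)
    (hK : K = (c * (M : ℝ)) •
      (S * ((c ^ 2 * (M : ℝ)) • S + σy ^ 2 • (1 : Matrix (Fin n) (Fin n) ℝ))⁻¹)) :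
    ∫ ω, ∑ i, (K.mulVec (y ω) i - s ω i) ^ 2 ∂P =
      (M : ℝ) - c ^ 2 * (M : ℝ) ^ 2 *
        (S * ((c ^ 2 * (M : ℝ)) • S + σy ^ 2 • (1 : Matrix (Fin n) (Fin n) ℝ))⁻¹ * S).trace := by
  have hγorth : Pairwise fun m m' => crossMoment P (γ m) (γ m') = 0 := fun m m' hm =>
    crossMoment_eq_zero_of_indepFun (hγindep.indepFun hm) (hγL2 m).1 (hγL2 m').1 (hγcent m)
  have hγcov (m : Fin M) : crossMoment P (γ m) (γ m) = S :=
    Matrix.ext fun i j => (hScov m i j).symm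
  have hνcov : crossMoment P ny ny = σy ^ 2 • (1 : Matrix (Fin n) (Fin n) ℝ) :=
    Matrix.ext hnycov
  have hγν (m : Fin M) : crossMoment P (γ m) ny = 0 :=
    crossMoment_eq_zero_of_indepFun (hnyindep.comp (measurable_pi_apply m) measurable_id)
      (hγL2 m).1 hnyL2.1 (hγcent m)
  have hsum : s = ∑ m, γ m := funext fun ω => (hs ω).trans (Finset.sum_apply ω _ γ).symm
  simpa only [Fintype.card_fin, htr, mul_one] using
    stmt8_general P γ hγL2 hγorth S hγcov ny hnyL2 _ hνcov (PosDef.one.smul (pow_pos hσy 2)) hγν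
      c s y hsum (funext hy) K (by simpa only [Fintype.card_fin] using hK)
end

section
/- Let M ≥ 2, let h ∈ ℝ^M with h_M ≠ 0, let d₁, …, d_{M−1} ∈ ℝ, and let A = diag(d₁,…,d_{M−1})·A′, where A′ is the (M−1)×M matrix whose i-th row r_i satisfies (r_i)_i = 1, (r_i)_M = −h_i/h_M, and (r_i)_j = 0 otherwise. Let g₁, …, g_M be mutually independent real square-integrable random variables with E[g_m] = σ_g·√(π/2) and E[g_m²] = 2·σ_g² for all m, where σ_g > 0. Then E[‖A·g‖²] = σ_g²·∑_{i=1}^{M−1} d_i²·(2·h_i²/h_M² − π·h_i/h_M + 2). -/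
open MeasureTheory ProbabilityTheory Matrix Real

section NullSpaceBasis

variable {ι κ R : Type*} [DecidableEq κ]

/-- The null-space basis in reduced row echelon form: row `i` is `e_{p i} - c i • e_k`, where `k`
is the free column and `p i` is the pivot column of row `i`; it is a basis when `p` enumerates
the columns other than `k`. The rows annihilate every vector `h` with `h (p i) = c i * h k`, so
the matrix `A'` of a vector `h` has `c i = h (p i) / h k`. -/
def nullSpaceBasis [Ring R] (p : ι → κ) (k : κ) (c : ι → R) : Matrix ι κ R :=
  Matrix.of fun i => Pi.single (p i) 1 - Pi.single k (c i)

lemma nullSpaceBasis_apply [Ring R] {p : ι → κ} {k : κ} (c : ι → R) {i : ι} (hpk : p i ≠ k)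
    (j : κ) :
    nullSpaceBasis p k c i j = if j = p i then 1 else if j = k then -c i else 0 := by
  rcases eq_or_ne j (p i) with rfl | hj
  · simp [nullSpaceBasis, hpk]
  · rcases eq_or_ne j k with rfl | hjk <;> simp [nullSpaceBasis, *]

lemma nullSpaceBasis_mulVec [Ring R] [Fintype κ] (p : ι → κ) (k : κ) (c : ι → R) (v : κ → R)
    (i : ι) : (nullSpaceBasis p k c *ᵥ v) i = v (p i) - c i * v k := by
  change (Pi.single (p i) 1 - Pi.single k (c i)) ⬝ᵥ v = _
  rw [sub_dotProduct, single_one_dotProduct, single_dotProduct]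

lemma diagonal_mul_nullSpaceBasis_mulVec [Ring R] [Fintype ι] [DecidableEq ι] [Fintype κ]
    (d : ι → R) (p : ι → κ) (k : κ) (c : ι → R) (v : κ → R) (i : ι) :
    ((diagonal d * nullSpaceBasis p k c) *ᵥ v) i = d i * (v (p i) - c i * v k) := by
  rw [← mulVec_mulVec, mulVec_diagonal, nullSpaceBasis_mulVec]

end NullSpaceBasis

section SecondMoment

variable {Ω : Type*} [MeasurableSpace Ω] {P : Measure Ω}

lemma integral_sub_const_mul_sq {X Y : Ω → ℝ} (hX : MemLp X 2 P) (hY : MemLp Y 2 P) (c : ℝ) :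
    ∫ ω, (X ω - c * Y ω) ^ 2 ∂P =
      ∫ ω, X ω ^ 2 ∂P - 2 * c * ∫ ω, X ω * Y ω ∂P + c ^ 2 * ∫ ω, Y ω ^ 2 ∂P := by
  have hXX : Integrable (fun ω => X ω ^ 2) P := hX.integrable_sq
  have hXY : Integrable (fun ω => 2 * c * (X ω * Y ω)) P := (hX.integrable_mul hY).const_mul _
  have hdiff : Integrable (fun ω => X ω ^ 2 - 2 * c * (X ω * Y ω)) P := hXX.sub hXY
  have hYY : Integrable (fun ω => c ^ 2 * Y ω ^ 2) P := hY.integrable_sq.const_mul _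
  calc ∫ ω, (X ω - c * Y ω) ^ 2 ∂P
      = ∫ ω, (X ω ^ 2 - 2 * c * (X ω * Y ω) + c ^ 2 * Y ω ^ 2) ∂P := by
        congr with ω
        ring
    _ = _ := by
        rw [integral_add hdiff hYY, integral_sub hXX hXY, integral_const_mul,
          integral_const_mul]

variable {ι κ : Type*} [Fintype ι] [DecidableEq ι] [Fintype κ] [DecidableEq κ]

lemma integral_sum_sq_diagonal_mul_nullSpaceBasis_mulVec {g : κ → Ω → ℝ}
    (hg : ∀ j, MemLp (g j) 2 P) (d : ι → ℝ) (p : ι → κ) (k : κ) (c : ι → ℝ) :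
    ∫ ω, ∑ i, ((diagonal d * nullSpaceBasis p k c) *ᵥ fun j => g j ω) i ^ 2 ∂P =
      ∑ i, d i ^ 2 * (∫ ω, g (p i) ω ^ 2 ∂P - 2 * c i * ∫ ω, g (p i) ω * g k ω ∂P +
        c i ^ 2 * ∫ ω, g k ω ^ 2 ∂P) := by
  have hsq_int (i : ι) : Integrable (fun ω => d i ^ 2 * (g (p i) ω - c i * g k ω) ^ 2) P :=
    ((hg (p i)).sub ((hg k).const_mul (c i))).integrable_sq.const_mul _
  simp only [diagonal_mul_nullSpaceBasis_mulVec, mul_pow]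
  rw [integral_finsetSum _ fun i _ => hsq_int i]
  simp only [integral_const_mul, integral_sub_const_mul_sq (hg _) (hg k)]

theorem stmt16_general [IsProbabilityMeasure P] {g : κ → Ω → ℝ} (hg : ∀ j, MemLp (g j) 2 P)
    (d : ι → ℝ) (p : ι → κ) (k : κ) (c : ι → ℝ) (hcov : ∀ i, cov[g (p i), g k; P] = 0) {σ : ℝ}
    (hmean : ∀ j, ∫ ω, g j ω ∂P = σ * √(π / 2)) (hsq : ∀ j, ∫ ω, g j ω ^ 2 ∂P = 2 * σ ^ 2) :
    ∫ ω, ∑ i, ((diagonal d * nullSpaceBasis p k c) *ᵥ fun j => g j ω) i ^ 2 ∂P =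
      σ ^ 2 * ∑ i, d i ^ 2 * (2 * c i ^ 2 - π * c i + 2) := by
  have hcross (i : ι) : ∫ ω, g (p i) ω * g k ω ∂P = σ ^ 2 * (π / 2) := by
    have hprod : ∫ ω, g (p i) ω * g k ω ∂P = (∫ ω, g (p i) ω ∂P) * ∫ ω, g k ω ∂P :=
      sub_eq_zero.mp ((covariance_eq_sub (hg (p i)) (hg k)).symm.trans (hcov i))
    rw [hprod, hmean, hmean, mul_mul_mul_comm, Real.mul_self_sqrt (by positivity), ← sq]
  rw [integral_sum_sq_diagonal_mul_nullSpaceBasis_mulVec hg, Finset.mul_sum]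
  refine Finset.sum_congr rfl fun i _ => ?_
  rw [hsq, hsq, hcross]
  ring

end SecondMoment

/-- expected artificial-noise power at the eavesdropper, Section IV-B: with
`A = diag(d₁,…,d_{M−1})·A′`, `A′` the reduced-row-echelon-form null-space basis of `h`, and
`g₁,…,g_M` mutually independent random variables with the first two moments of a Rayleigh
distribution with scale `σ_g` (`E[g_m] = σ_g·√(π/2)`, `E[g_m²] = 2·σ_g²`), one has
`E[‖A·g‖²] = σ_g²·∑ i, d_i²·(2·h_i²/h_M² − π·h_i/h_M + 2)`,
where `‖·‖` is the Euclidean norm (`‖v‖² = ∑ i, v_i²`). -/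
theorem stmt16 {Ω : Type*} [MeasurableSpace Ω] (P : Measure Ω) [IsProbabilityMeasure P]
    {M : ℕ} (hM : 2 ≤ M) (h : Fin M → ℝ)
    (hlast : h ⟨M - 1, by omega⟩ ≠ 0)
    (d : Fin (M - 1) → ℝ)
    (A' : Matrix (Fin (M - 1)) (Fin M) ℝ)
    (hA' : ∀ (i : Fin (M - 1)) (j : Fin M), A' i j =
      if (j : ℕ) = (i : ℕ) then 1
      else if (j : ℕ) = M - 1 then -(h (Fin.castLE (by omega) i) / h ⟨M - 1, by omega⟩)
      else 0)
    (A : Matrix (Fin (M - 1)) (Fin M) ℝ) (hA : A = Matrix.diagonal d * A')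
    (σg : ℝ) (hσg : 0 < σg)
    (g : Fin M → Ω → ℝ) (hgmeas : ∀ m, Measurable (g m))
    (hgL2 : ∀ m, MemLp (g m) 2 P)
    (hgindep : iIndepFun (m := fun _ : Fin M => (inferInstance : MeasurableSpace ℝ)) g P)
    (hgmean : ∀ m, ∫ ω, g m ω ∂P = σg * Real.sqrt (π / 2))
    (hgsq : ∀ m, ∫ ω, (g m ω) ^ 2 ∂P = 2 * σg ^ 2) :
    ∫ ω, ∑ i, (A.mulVec (fun m => g m ω) i) ^ 2 ∂P =
      σg ^ 2 * ∑ i : Fin (M - 1), (d i) ^ 2 *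
        (2 * (h (Fin.castLE (by omega) i)) ^ 2 / (h ⟨M - 1, by omega⟩) ^ 2
          - π * (h (Fin.castLE (by omega) i)) / h ⟨M - 1, by omega⟩ + 2) := by
  have hne (i : Fin (M - 1)) : Fin.castLE (Nat.sub_le M 1) i ≠ ⟨M - 1, by omega⟩ :=
    Fin.ne_of_val_ne i.isLt.ne
  have hA'_eq : A' = nullSpaceBasis (Fin.castLE (by omega)) ⟨M - 1, by omega⟩
      fun i => h (Fin.castLE (by omega) i) / h ⟨M - 1, by omega⟩ := by
    ext i j
    simp only [hA', nullSpaceBasis_apply _ (hne i), Fin.ext_iff, Fin.val_castLE]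
  have hcov i := (hgindep.indepFun (hne i)).covariance_eq_zero (hgL2 _) (hgL2 _)
  rw [hA, hA'_eq, stmt16_general hgL2 d _ _ _ hcov hgmean hgsq]
  simp only [div_pow, mul_div_assoc]
end

section
/- On a probability space (Ω, F, P), let γ₁, …, γ_M : Ω → ℝⁿ be i.i.d. centered square-integrable random vectors with covariance Σ = E[γ_m·γ_mᵀ] satisfying Tr(Σ) = 1, let V : Ω → ℝ^{n×(M−1)} have mutually independent, centered, unit-variance entries, and let n_z : Ω → ℝⁿ be centered with E[n_z·n_zᵀ] = σ_z²·I; assume (γ₁,…,γ_M), V and n_z are mutually independent. Let c > 0, h ∈ ℝ^M with all entries nonzero, g ∈ ℝ^M, A ∈ ℝ^{(M−1)×M} with ‖A·g‖² + σ_z² > 0, and set s = ∑_{m=1}^{M} γ_m, z = c·∑_{m=1}^{M} (g_m/h_m)·γ_m + V·(A·g) + n_z, and R = c²·(∑_{m=1}^{M} g_m²/h_m²)·Σ + (‖A·g‖² + σ_z²)·I. Then for every matrix K ∈ ℝ^{n×n} and vector b ∈ ℝⁿ, E[‖K·z + b − s‖²] ≥ M − c²·(∑_{m=1}^{M} g_m/h_m)²·Tr(Σ·R⁻¹·Σ).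 -/
open MeasureTheory ProbabilityTheory Matrix

/-- Index type for the joint family consisting of the `M` user inputs `γ_m`, the
`n·(M−1)` entries of the artificial-noise matrix `V`, and the channel noise `n_z`. -/
abbrev JointIdx (M n : ℕ) : Type := Fin M ⊕ (Fin n × Fin (M - 1)) ⊕ Unit

/-- Codomains of the joint family: `γ_m` and `n_z` are `ℝⁿ`-valued, the entries of `V`
are real-valued. -/
def jointCod (M n : ℕ) : JointIdx M n → Type
  | .inl _ => Fin n → ℝ
  | .inr (.inl _) => ℝ
  | .inr (.inr _) => Fin n → ℝ

/-- The measurable-space structures on the codomains of the joint family. -/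
def jointCodMS (M n : ℕ) : ∀ i : JointIdx M n, MeasurableSpace (jointCod M n i)
  | .inl _ => inferInstanceAs (MeasurableSpace (Fin n → ℝ))
  | .inr (.inl _) => inferInstanceAs (MeasurableSpace ℝ)
  | .inr (.inr _) => inferInstanceAs (MeasurableSpace (Fin n → ℝ))

/-- The joint family `(γ₁, …, γ_M, (V i j)_{i,j}, n_z)` of random quantities; asserting
`iIndepFun` for this family expresses that the inputs `γ_m`, the entries of `V`, and the
noise `n_z` are all mutually independent. -/
def jointFam {Ω : Type*} {M n : ℕ} (γ : Fin M → Ω → Fin n → ℝ)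
    (V : Ω → Matrix (Fin n) (Fin (M - 1)) ℝ) (nz : Ω → Fin n → ℝ) :
    ∀ i : JointIdx M n, Ω → jointCod M n i
  | .inl m => γ m
  | .inr (.inl p) => fun ω => V ω p.1 p.2
  | .inr (.inr _) => nz

/-!
The mean squared error of an affine estimate `K z + b` of `s` is at least the trace of the
covariance matrix of `K z - s`. The regression residual `e = Cov(s, z) Cov(z)⁻¹ z - s` is
uncorrelated with `z`, so the covariance of `K z - s` is that of `e` plus a positive semidefinite
matrix. The residual has covariance `Cov(s) - Cov(s, z) Cov(z)⁻¹ Cov(z, s)`, and for the observation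
at hand, with weights `w m = c g m / h m`, independence gives `Cov(s) = M S`,
`Cov(s, z) = Cov(z, s) = (∑ m, w m) S` and
`Cov(z) = (∑ m, w m ^ 2) S + (‖A g‖² + σz²) I = R`.
-/

section CrossCovariance

variable {Ω ι κ τ : Type*} [MeasurableSpace Ω] {μ : Measure Ω}
  {X X' : Ω → ι → ℝ} {Y Y' : Ω → κ → ℝ}

/-- The cross-covariance matrix of two random vectors, with entries `cov[X i, Y j]`. The covariance
matrix of `X` is `crossCov X X μ`. -/
noncomputable def crossCov (X : Ω → ι → ℝ) (Y : Ω → κ → ℝ) (μ : Measure Ω) : Matrix ι κ ℝ :=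
  .of fun i j => cov[fun ω => X ω i, fun ω => Y ω j; μ]

lemma crossCov_apply (i : ι) (j : κ) :
    crossCov X Y μ i j = cov[fun ω => X ω i, fun ω => Y ω j; μ] :=
  rfl

lemma crossCov_transpose : (crossCov X Y μ)ᵀ = crossCov Y X μ := by
  ext i j
  exact covariance_comm _ _

variable [Fintype ι] [Fintype κ]

lemma memLp_mulVec_s18 {p : ENNReal} (hX : MemLp X p μ) (K : Matrix κ ι ℝ) :
    MemLp (fun ω => K *ᵥ X ω) p μ :=
  .of_eval fun i => memLp_finsetSum _ fun j _ => (hX.eval j).const_mul (K i j)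

lemma crossCov_eq_zero_of_indepFun (hX : MemLp X 2 μ) (hY : MemLp Y 2 μ)
    (hXY : ∀ i j, IndepFun (fun ω => X ω i) (fun ω => Y ω j) μ) : crossCov X Y μ = 0 := by
  ext i j
  exact (hXY i j).covariance_eq_zero (hX.eval i) (hY.eval j)

lemma crossCov_apply_of_centered [IsProbabilityMeasure μ] (hX : MemLp X 2 μ) (hY : MemLp Y 2 μ)
    (hX0 : ∀ i, ∫ ω, X ω i ∂μ = 0) (i : ι) (j : κ) :
    crossCov X Y μ i j = ∫ ω, X ω i * Y ω j ∂μ := by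
  rw [crossCov_apply, covariance_eq_sub (hX.eval i) (hY.eval j), hX0 i, zero_mul, sub_zero]
  rfl

lemma crossCov_self_eq_smul_one_of_centered [IsProbabilityMeasure μ] [DecidableEq ι]
    (hX : MemLp X 2 μ) (hX0 : ∀ i, ∫ ω, X ω i ∂μ = 0) {v : ℝ}
    (hv : ∀ i j, ∫ ω, X ω i * X ω j ∂μ = v * if i = j then 1 else 0) :
    crossCov X X μ = v • 1 := by
  ext i j
  rw [crossCov_apply_of_centered hX hX hX0, hv, Matrix.smul_apply, one_apply, smul_eq_mul]

section Bilinear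

variable [IsFiniteMeasure μ]

lemma crossCov_add_left (hX : MemLp X 2 μ) (hX' : MemLp X' 2 μ) (hY : MemLp Y 2 μ) :
    crossCov (X + X') Y μ = crossCov X Y μ + crossCov X' Y μ := by
  ext i j
  exact covariance_add_left (hX.eval i) (hX'.eval i) (hY.eval j)

lemma crossCov_add_right (hX : MemLp X 2 μ) (hY : MemLp Y 2 μ) (hY' : MemLp Y' 2 μ) :
    crossCov X (Y + Y') μ = crossCov X Y μ + crossCov X Y' μ := by
  ext i j
  exact covariance_add_right (hX.eval i) (hY.eval j) (hY'.eval j)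

lemma crossCov_sub_left (hX : MemLp X 2 μ) (hX' : MemLp X' 2 μ) (hY : MemLp Y 2 μ) :
    crossCov (X - X') Y μ = crossCov X Y μ - crossCov X' Y μ := by
  ext i j
  exact covariance_sub_left (hX.eval i) (hX'.eval i) (hY.eval j)

lemma crossCov_sub_right (hX : MemLp X 2 μ) (hY : MemLp Y 2 μ) (hY' : MemLp Y' 2 μ) :
    crossCov X (Y - Y') μ = crossCov X Y μ - crossCov X Y' μ := by
  ext i j
  exact covariance_sub_right (hX.eval i) (hY.eval j) (hY'.eval j)

lemma crossCov_self_add_of_eq_zero (hX : MemLp X 2 μ) (hX' : MemLp X' 2 μ)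
    (h0 : crossCov X X' μ = 0) :
    crossCov (X + X') (X + X') μ = crossCov X X μ + crossCov X' X' μ := by
  have h0' : crossCov X' X μ = 0 := by rw [← crossCov_transpose, h0, transpose_zero]
  rw [crossCov_add_left hX hX' (hX.add hX'), crossCov_add_right hX hX hX',
    crossCov_add_right hX' hX hX', h0, h0', add_zero, zero_add]

lemma crossCov_sum_smul_left [Fintype τ] {Z : τ → Ω → ι → ℝ} (hZ : ∀ t, MemLp (Z t) 2 μ)
    (hY : MemLp Y 2 μ) (w : τ → ℝ) :
    crossCov (fun ω => ∑ t, w t • Z t ω) Y μ = ∑ t, w t • crossCov (Z t) Y μ := by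
  ext i j
  simp only [crossCov_apply, Finset.sum_apply, Pi.smul_apply, smul_eq_mul, Matrix.sum_apply,
    Matrix.smul_apply]
  rw [covariance_fun_sum_left (fun t => ((hZ t).eval i).const_mul (w t)) (hY.eval j)]
  simp only [covariance_const_mul_left]

lemma crossCov_sum_smul_right [Fintype τ] {Z : τ → Ω → κ → ℝ} (hX : MemLp X 2 μ)
    (hZ : ∀ t, MemLp (Z t) 2 μ) (w : τ → ℝ) :
    crossCov X (fun ω => ∑ t, w t • Z t ω) μ = ∑ t, w t • crossCov X (Z t) μ := by
  rw [← crossCov_transpose, crossCov_sum_smul_left hZ hX, transpose_sum]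
  simp only [transpose_smul, crossCov_transpose]

lemma crossCov_mulVec_left (hX : MemLp X 2 μ) (hY : MemLp Y 2 μ) (K : Matrix τ ι ℝ) :
    crossCov (fun ω => K *ᵥ X ω) Y μ = K * crossCov X Y μ := by
  ext i j
  simp only [crossCov_apply, mulVec, dotProduct, mul_apply]
  rw [covariance_fun_sum_left (fun k => (hX.eval k).const_mul (K i k)) (hY.eval j)]
  simp only [covariance_const_mul_left]

lemma crossCov_mulVec_right (hX : MemLp X 2 μ) (hY : MemLp Y 2 μ) (K : Matrix τ κ ℝ) :
    crossCov X (fun ω => K *ᵥ Y ω) μ = crossCov X Y μ * Kᵀ := by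
  rw [← crossCov_transpose, crossCov_mulVec_left hY hX, transpose_mul, crossCov_transpose]

lemma posSemidef_crossCov_self (hX : MemLp X 2 μ) : (crossCov X X μ).PosSemidef := by
  refine .of_dotProduct_mulVec_nonneg (by
    rw [IsHermitian, conjTranspose_eq_transpose_of_trivial, crossCov_transpose]) fun x => ?_
  have hvar := variance_nonneg (fun ω => ∑ i, x i * X ω i) μ
  rw [variance_fun_sum fun i => (hX.eval i).const_mul (x i)] at hvar
  refine hvar.trans_eq ?_
  simp only [covariance_const_mul_left, covariance_const_mul_right, dotProduct, mulVec,
    Pi.star_apply, star_trivial, Finset.mul_sum, crossCov_apply]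
  exact Finset.sum_congr rfl fun i _ => Finset.sum_congr rfl fun j _ => by ring

end Bilinear

section Probability

variable [IsProbabilityMeasure μ]

lemma crossCov_self_add_const (hX : MemLp X 2 μ) (b : ι → ℝ) :
    crossCov (fun ω => X ω + b) (fun ω => X ω + b) μ = crossCov X X μ := by
  have hint (i : ι) : Integrable (fun ω => X ω i) μ := (hX.eval i).integrable one_le_two
  ext i j
  simp only [crossCov_apply, Pi.add_apply]
  rw [covariance_add_const_left (hint i), covariance_add_const_right (hint j)]

lemma trace_crossCov_self_le_integral_sum_sq (hX : MemLp X 2 μ) :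
    (crossCov X X μ).trace ≤ ∫ ω, ∑ i, X ω i ^ 2 ∂μ := by
  rw [integral_finsetSum _ fun i _ => (hX.eval i).integrable_sq]
  refine Finset.sum_le_sum fun i _ => ?_
  rw [diag_apply, crossCov_apply, covariance_self (hX.eval i).aemeasurable]
  exact variance_le_expectation_sq (hX.eval i).aestronglyMeasurable

end Probability

end CrossCovariance

section LinearEstimation

variable {Ω ι κ : Type*} [MeasurableSpace Ω] {μ : Measure Ω} [Fintype ι] [Fintype κ]
  [DecidableEq κ] {s : Ω → ι → ℝ} {z : Ω → κ → ℝ}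

/-- The gain matrix of the linear minimum mean square error estimate of `s` from `z`, which is the
coefficient `Cov(s, z) Cov(z)⁻¹` of the linear regression of `s` on `z`. It is meaningful only when
`Cov(z)` is invertible. -/
noncomputable def lmmseGain (s : Ω → ι → ℝ) (z : Ω → κ → ℝ) (μ : Measure Ω) : Matrix ι κ ℝ :=
  crossCov s z μ * (crossCov z z μ)⁻¹

section FiniteMeasure

variable [IsFiniteMeasure μ] (hs : MemLp s 2 μ) (hz : MemLp z 2 μ)
  (hunit : IsUnit (crossCov z z μ))
include hs hz hunit

lemma crossCov_lmmse_error_observation :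
    crossCov ((fun ω => lmmseGain s z μ *ᵥ z ω) - s) z μ = 0 := by
  rw [crossCov_sub_left (memLp_mulVec_s18 hz _) hs hz, crossCov_mulVec_left hz hz, lmmseGain,
    nonsing_inv_mul_cancel_right _ _ ((isUnit_iff_isUnit_det _).mp hunit), sub_self]

lemma crossCov_lmmse_error_self :
    crossCov ((fun ω => lmmseGain s z μ *ᵥ z ω) - s) ((fun ω => lmmseGain s z μ *ᵥ z ω) - s) μ =
      crossCov s s μ - crossCov s z μ * (crossCov z z μ)⁻¹ * crossCov z s μ := by
  have hest : MemLp (fun ω => lmmseGain s z μ *ᵥ z ω) 2 μ := memLp_mulVec_s18 hz _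
  rw [crossCov_sub_right (hest.sub hs) hest hs, crossCov_mulVec_right (hest.sub hs) hz,
    crossCov_lmmse_error_observation hs hz hunit, crossCov_sub_left hest hs hs,
    crossCov_mulVec_left hz hs, Matrix.zero_mul, zero_sub, neg_sub, lmmseGain]

lemma trace_lmmse_error_le_trace_linear_error (K : Matrix ι κ ℝ) :
    (crossCov s s μ - crossCov s z μ * (crossCov z z μ)⁻¹ * crossCov z s μ).trace ≤
      (crossCov ((fun ω => K *ᵥ z ω) - s) ((fun ω => K *ᵥ z ω) - s) μ).trace := by
  set e := (fun ω => lmmseGain s z μ *ᵥ z ω) - s with he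
  set d := fun ω => (K - lmmseGain s z μ) *ᵥ z ω with hd
  have he2 : MemLp e 2 μ := (memLp_mulVec_s18 hz _).sub hs
  have hd2 : MemLp d 2 μ := memLp_mulVec_s18 hz _
  have hsplit : (fun ω => K *ᵥ z ω) - s = e + d := by
    ext ω i
    simp [he, hd, sub_mulVec]
  have horth : crossCov e d μ = 0 := by
    rw [crossCov_mulVec_right he2 hz, crossCov_lmmse_error_observation hs hz hunit,
      Matrix.zero_mul]
  rw [hsplit, crossCov_self_add_of_eq_zero he2 hd2 horth, trace_add,
    crossCov_lmmse_error_self hs hz hunit]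
  exact le_add_of_nonneg_right (posSemidef_crossCov_self hd2).trace_nonneg

end FiniteMeasure

theorem trace_lmmse_error_le_integral_affine_error [IsProbabilityMeasure μ] (hs : MemLp s 2 μ)
    (hz : MemLp z 2 μ) (hunit : IsUnit (crossCov z z μ)) (K : Matrix ι κ ℝ) (b : ι → ℝ) :
    (crossCov s s μ - crossCov s z μ * (crossCov z z μ)⁻¹ * crossCov z s μ).trace ≤
      ∫ ω, ∑ i, ((K *ᵥ z ω) i + b i - s ω i) ^ 2 ∂μ := by
  set e := (fun ω => K *ᵥ z ω) - s with he
  have he2 : MemLp e 2 μ := (memLp_mulVec_s18 hz K).sub hs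
  calc
    _ ≤ (crossCov e e μ).trace := trace_lmmse_error_le_trace_linear_error hs hz hunit K
    _ = (crossCov (fun ω => e ω + b) (fun ω => e ω + b) μ).trace := by
      rw [crossCov_self_add_const he2 b]
    _ ≤ ∫ ω, ∑ i, (e ω + b) i ^ 2 ∂μ :=
      trace_crossCov_self_le_integral_sum_sq (he2.add (memLp_const b))
    _ = _ := by simp only [he, Pi.add_apply, Pi.sub_apply, sub_add_eq_add_sub]

end LinearEstimation

section WhiteFamily

variable {Ω ι κ : Type*} [MeasurableSpace Ω] {μ : Measure Ω} [Fintype ι] [DecidableEq κ]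
  {X : κ → Ω → ι → ℝ} {S : Matrix ι ι ℝ}

/-- A family of pairwise uncorrelated square-integrable random vectors with common covariance
matrix `S`, as white noise is for `S = 1`. It is the second-order content of an i.i.d. family;
`crossCov` being centered, the means are arbitrary. -/
structure IsWhiteFamily (X : κ → Ω → ι → ℝ) (S : Matrix ι ι ℝ) (μ : Measure Ω) : Prop where
  memLp : ∀ k, MemLp (X k) 2 μ
  crossCov_eq : ∀ k l, crossCov (X k) (X l) μ = if k = l then S else 0

namespace IsWhiteFamily

lemma of_indepFun [IsProbabilityMeasure μ] (hX : ∀ k, MemLp (X k) 2 μ)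
    (hX0 : ∀ k i, ∫ ω, X k ω i ∂μ = 0) (hS : ∀ k i j, S i j = ∫ ω, X k ω i * X k ω j ∂μ)
    (hind : Pairwise fun k l => ∀ i j, IndepFun (fun ω => X k ω i) (fun ω => X l ω j) μ) :
    IsWhiteFamily X S μ where
  memLp := hX
  crossCov_eq k l := by
    split_ifs with hkl
    · subst hkl
      ext i j
      rw [crossCov_apply_of_centered (hX k) (hX k) (hX0 k), hS k]
    · exact crossCov_eq_zero_of_indepFun (hX k) (hX l) (hind hkl)

lemma col_of_indepFun [IsProbabilityMeasure μ] [DecidableEq ι] {V : Ω → Matrix ι κ ℝ}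
    (hV : ∀ i k, MemLp (fun ω => V ω i k) 2 μ) (hV0 : ∀ i k, ∫ ω, V ω i k ∂μ = 0)
    (hV1 : ∀ i k, ∫ ω, V ω i k ^ 2 ∂μ = 1)
    (hind : Pairwise fun p q : ι × κ => IndepFun (fun ω => V ω p.1 p.2) (fun ω => V ω q.1 q.2) μ) :
    IsWhiteFamily (fun k ω => (V ω).col k) 1 μ := by
  refine of_indepFun (fun k => .of_eval fun i => hV i k) (fun k i => hV0 i k) (fun k i j => ?_)
    fun k l hkl i j => hind (i := (i, k)) (j := (j, l)) (by simp [hkl])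
  obtain rfl | hij := eq_or_ne i j
  · simpa only [one_apply_eq, col_apply, sq] using (hV1 i k).symm
  · have hij' : IndepFun (fun ω => V ω i k) (fun ω => V ω j k) μ :=
      hind (i := (i, k)) (j := (j, k)) (by simp [hij])
    have hprod := hij'.integral_fun_mul_eq_mul_integral (hV i k).aestronglyMeasurable
      (hV j k).aestronglyMeasurable
    rw [hV0 i k, zero_mul] at hprod
    rw [one_apply_ne hij]
    exact hprod.symm

lemma posSemidef [IsFiniteMeasure μ] [Nonempty κ] (hX : IsWhiteFamily X S μ) :
    S.PosSemidef := by
  obtain ⟨k⟩ := ‹Nonempty κ›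
  simpa only [hX.crossCov_eq, if_true] using posSemidef_crossCov_self (hX.memLp k)

lemma isUnit_smul_add_smul_one [IsFiniteMeasure μ] [Nonempty κ] [DecidableEq ι]
    (hX : IsWhiteFamily X S μ) {ρ v : ℝ} (hρ : 0 ≤ ρ) (hv : 0 < v) : IsUnit (ρ • S + v • 1) :=
  (PosDef.posSemidef_add (hX.posSemidef.smul hρ) (PosDef.one.smul hv)).isUnit

variable [Fintype κ]

lemma memLp_sum_smul (hX : IsWhiteFamily X S μ) (w : κ → ℝ) :
    MemLp (fun ω => ∑ k, w k • X k ω) 2 μ :=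
  memLp_finsetSum _ fun k _ => (hX.memLp k).const_smul (w k)

lemma crossCov_sum_smul [IsFiniteMeasure μ] (hX : IsWhiteFamily X S μ) (w v : κ → ℝ) :
    crossCov (fun ω => ∑ k, w k • X k ω) (fun ω => ∑ k, v k • X k ω) μ =
      (∑ k, w k * v k) • S := by
  rw [crossCov_sum_smul_left hX.memLp (hX.memLp_sum_smul v), Finset.sum_smul]
  refine Finset.sum_congr rfl fun k _ => ?_
  rw [crossCov_sum_smul_right (hX.memLp k) hX.memLp]
  simp only [hX.crossCov_eq, smul_ite, smul_zero, Finset.sum_ite_eq, Finset.mem_univ, if_true,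
    smul_smul]

theorem le_integral_affine_error_sum_add [IsProbabilityMeasure μ] [DecidableEq ι]
    (hX : IsWhiteFamily X S μ) {η : Ω → ι → ℝ} (hη : MemLp η 2 μ)
    (hXη : ∀ k, crossCov (X k) η μ = 0) (w : κ → ℝ) {R : Matrix ι ι ℝ}
    (hR : R = (∑ k, w k ^ 2) • S + crossCov η η μ) (hunit : IsUnit R)
    (K : Matrix ι ι ℝ) (b : ι → ℝ) :
    Fintype.card κ * S.trace - (∑ k, w k) ^ 2 * (S * R⁻¹ * S).trace ≤
      ∫ ω, ∑ i, ((K *ᵥ (∑ k, w k • X k ω + η ω)) i + b i - (∑ k, X k ω) i) ^ 2 ∂μ := by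
  set s : Ω → ι → ℝ := fun ω => ∑ k, (1 : κ → ℝ) k • X k ω
  set G : Ω → ι → ℝ := fun ω => ∑ k, w k • X k ω
  have hs2 : MemLp s 2 μ := hX.memLp_sum_smul 1
  have hG2 : MemLp G 2 μ := hX.memLp_sum_smul w
  have hη0 (v : κ → ℝ) : crossCov (fun ω => ∑ k, v k • X k ω) η μ = 0 := by
    simp only [crossCov_sum_smul_left hX.memLp hη, hXη, smul_zero, Finset.sum_const_zero]
  have hss : crossCov s s μ = (Fintype.card κ : ℝ) • S := by
    rw [hX.crossCov_sum_smul]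
    simp
  have hsz : crossCov s (G + η) μ = (∑ k, w k) • S := by
    rw [crossCov_add_right hs2 hG2 hη, hX.crossCov_sum_smul, hη0]
    simp
  have hzs : crossCov (G + η) s μ = (∑ k, w k) • S := by
    rw [crossCov_add_left hG2 hη hs2, hX.crossCov_sum_smul, ← crossCov_transpose (X := s), hη0]
    simp
  have hzz : crossCov (G + η) (G + η) μ = R := by
    rw [crossCov_self_add_of_eq_zero hG2 hη (hη0 w), hX.crossCov_sum_smul, hR]
    simp only [sq]
  have hbound := trace_lmmse_error_le_integral_affine_error hs2 (hG2.add hη)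
    (by rwa [hzz]) K b
  rw [hss, hsz, hzs, hzz] at hbound
  simpa [s, G, sq, mul_assoc] using hbound

end IsWhiteFamily

end WhiteFamily

theorem stmt18_general {Ω ι κ τ : Type*} [MeasurableSpace Ω] {P : Measure Ω}
    [IsProbabilityMeasure P] [Fintype ι] [DecidableEq ι] [Fintype κ] [DecidableEq κ] [Fintype τ]
    [DecidableEq τ] {γ : κ → Ω → ι → ℝ} {S : Matrix ι ι ℝ} (hγ : IsWhiteFamily γ S P)
    {V : Ω → Matrix ι τ ℝ} {T : Matrix ι ι ℝ} (hV : IsWhiteFamily (fun t ω => (V ω).col t) T P)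
    {nz : Ω → ι → ℝ} (hnz : MemLp nz 2 P)
    (hγV : ∀ m t, crossCov (γ m) (fun ω => (V ω).col t) P = 0)
    (hγnz : ∀ m, crossCov (γ m) nz P = 0)
    (hVnz : ∀ t, crossCov (fun ω => (V ω).col t) nz P = 0)
    (w : κ → ℝ) (a : τ → ℝ) {s z : Ω → ι → ℝ} (hs : ∀ ω, s ω = ∑ m, γ m ω)
    (hz : ∀ ω, z ω = ∑ m, w m • γ m ω + V ω *ᵥ a + nz ω) {R : Matrix ι ι ℝ}
    (hR : R = (∑ m, w m ^ 2) • S + ((∑ t, a t ^ 2) • T + crossCov nz nz P)) (hunit : IsUnit R)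
    (K : Matrix ι ι ℝ) (b : ι → ℝ) :
    Fintype.card κ * S.trace - (∑ m, w m) ^ 2 * (S * R⁻¹ * S).trace ≤
      ∫ ω, ∑ i, ((K *ᵥ z ω) i + b i - s ω i) ^ 2 ∂P := by
  set W : Ω → ι → ℝ := fun ω => ∑ t, a t • (V ω).col t
  have hVa (ω : Ω) : V ω *ᵥ a = W ω := by
    ext i
    simp [W, mulVec, dotProduct, mul_comm]
  have hW : MemLp W 2 P := hV.memLp_sum_smul a
  have hWnz : crossCov W nz P = 0 := by
    simp only [W, crossCov_sum_smul_left hV.memLp hnz, hVnz, smul_zero, Finset.sum_const_zero]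
  have hγη (m : κ) : crossCov (γ m) (W + nz) P = 0 := by
    rw [crossCov_add_right (hγ.memLp m) hW hnz, crossCov_sum_smul_right (hγ.memLp m) hV.memLp]
    simp only [hγV, hγnz, smul_zero, Finset.sum_const_zero, add_zero]
  have hηη : crossCov (W + nz) (W + nz) P = (∑ t, a t ^ 2) • T + crossCov nz nz P := by
    rw [crossCov_self_add_of_eq_zero hW hnz hWnz, hV.crossCov_sum_smul]
    simp only [sq]
  simpa only [hs, hz, hVa, Pi.add_apply, add_assoc] using
    hγ.le_integral_affine_error_sum_add (hW.add hnz) hγη w (hηη ▸ hR) hunit K b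

section JointFamily

variable {Ω : Type*} [MeasurableSpace Ω] {P : Measure Ω} {n M : ℕ} {γ : Fin M → Ω → Fin n → ℝ}
  {V : Ω → Matrix (Fin n) (Fin (M - 1)) ℝ} {nz : Ω → Fin n → ℝ}
  (hindep : iIndepFun (m := jointCodMS M n) (jointFam γ V nz) P)
include hindep

lemma isWhiteFamily_input [IsProbabilityMeasure P] (hγ : ∀ m, MemLp (γ m) 2 P)
    (hγ0 : ∀ m i, ∫ ω, γ m ω i ∂P = 0) {S : Matrix (Fin n) (Fin n) ℝ}
    (hS : ∀ m i j, S i j = ∫ ω, γ m ω i * γ m ω j ∂P) : IsWhiteFamily γ S P :=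
  .of_indepFun hγ hγ0 hS fun m m' hm i j =>
    (hindep.indepFun (i := .inl m) (j := .inl m') (by simpa using hm)).comp
      (measurable_pi_apply i) (measurable_pi_apply j)

lemma isWhiteFamily_col_artificialNoise [IsProbabilityMeasure P]
    (hV : ∀ i t, MemLp (fun ω => V ω i t) 2 P) (hV0 : ∀ i t, ∫ ω, V ω i t ∂P = 0)
    (hV1 : ∀ i t, ∫ ω, V ω i t ^ 2 ∂P = 1) :
    IsWhiteFamily (fun t ω => (V ω).col t) 1 P :=
  .col_of_indepFun hV hV0 hV1 fun p q hpq =>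
    hindep.indepFun (i := .inr (.inl p)) (j := .inr (.inl q)) (by simpa using hpq)

lemma crossCov_input_col_artificialNoise (hγ : ∀ m, MemLp (γ m) 2 P)
    (hV : ∀ i t, MemLp (fun ω => V ω i t) 2 P) (m : Fin M) (t : Fin (M - 1)) :
    crossCov (γ m) (fun ω => (V ω).col t) P = 0 :=
  crossCov_eq_zero_of_indepFun (hγ m) (.of_eval fun i => hV i t) fun i j =>
    (hindep.indepFun (i := .inl m) (j := .inr (.inl (j, t))) (by simp)).comp
      (measurable_pi_apply i) measurable_id

lemma crossCov_input_channelNoise (hγ : ∀ m, MemLp (γ m) 2 P) (hnz : MemLp nz 2 P) (m : Fin M) :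
    crossCov (γ m) nz P = 0 :=
  crossCov_eq_zero_of_indepFun (hγ m) hnz fun i j =>
    (hindep.indepFun (i := .inl m) (j := .inr (.inr ())) (by simp)).comp
      (measurable_pi_apply i) (measurable_pi_apply j)

lemma crossCov_col_artificialNoise_channelNoise (hV : ∀ i t, MemLp (fun ω => V ω i t) 2 P)
    (hnz : MemLp nz 2 P) (t : Fin (M - 1)) : crossCov (fun ω => (V ω).col t) nz P = 0 :=
  crossCov_eq_zero_of_indepFun (.of_eval fun i => hV i t) hnz fun i j =>
    (hindep.indepFun (i := .inr (.inl (i, t))) (j := .inr (.inr ())) (by simp)).comp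
      measurable_id (measurable_pi_apply j)

end JointFamily

/-- MSE-security of Theorem 1 restricted to affine estimators: for the
proposed scheme, every affine estimate `K·z + b` of the computation result `s = ∑ m, γ m` from
the eavesdropper's observation `z` incurs mean squared error at least the security level
`M − c²·(∑ m, g_m/h_m)²·Tr(S·R⁻¹·S)`, where
`R = c²·(∑ m, g_m²/h_m²)·S + (‖A·g‖² + σ_z²)·I` and `‖v‖² = ∑ i, v_i²`. -/
theorem stmt18 {Ω : Type*} [MeasurableSpace Ω] (P : Measure Ω) [IsProbabilityMeasure P]
    {n M : ℕ} (hn : 1 ≤ n) (hM : 1 ≤ M)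
    (γ : Fin M → Ω → Fin n → ℝ) (hγmeas : ∀ m, Measurable (γ m))
    (hγL2 : ∀ m, MemLp (γ m) 2 P)
    (hγident : ∀ m m', IdentDistrib (γ m) (γ m') P P)
    (hγcent : ∀ m i, ∫ ω, γ m ω i ∂P = 0)
    (S : Matrix (Fin n) (Fin n) ℝ) (hScov : ∀ m i j, S i j = ∫ ω, γ m ω i * γ m ω j ∂P)
    (htr : S.trace = 1)
    (V : Ω → Matrix (Fin n) (Fin (M - 1)) ℝ)
    (hVmeas : ∀ i j, Measurable fun ω => V ω i j)
    (hVcent : ∀ i j, ∫ ω, V ω i j ∂P = 0)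
    (hVvar : ∀ i j, ∫ ω, (V ω i j) ^ 2 ∂P = 1)
    (hVL2 : ∀ i j, MemLp (fun ω => V ω i j) 2 P)
    (σz : ℝ)
    (nz : Ω → Fin n → ℝ) (hnzmeas : Measurable nz) (hnzL2 : MemLp nz 2 P)
    (hnzcent : ∀ i, ∫ ω, nz ω i ∂P = 0)
    (hnzcov : ∀ i j, (∫ ω, nz ω i * nz ω j ∂P) = σz ^ 2 * (if i = j then 1 else 0))
    (hindep : iIndepFun (m := jointCodMS M n) (jointFam γ V nz) P)
    (c : ℝ) (hc : 0 < c) (h g : Fin M → ℝ) (hh : ∀ m, h m ≠ 0)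
    (A : Matrix (Fin (M - 1)) (Fin M) ℝ)
    (hAgpos : 0 < (∑ t, (A.mulVec g t) ^ 2) + σz ^ 2)
    (s z : Ω → Fin n → ℝ) (hs : ∀ ω, s ω = ∑ m, γ m ω)
    (hz : ∀ ω, z ω = c • (∑ m, (g m / h m) • γ m ω) + (V ω).mulVec (A.mulVec g) + nz ω)
    (R : Matrix (Fin n) (Fin n) ℝ)
    (hR : R = (c ^ 2 * ∑ m, (g m) ^ 2 / (h m) ^ 2) • S +
      ((∑ t, (A.mulVec g t) ^ 2) + σz ^ 2) • (1 : Matrix (Fin n) (Fin n) ℝ)) :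
    ∀ (K : Matrix (Fin n) (Fin n) ℝ) (b : Fin n → ℝ),
      ∫ ω, ∑ i, (K.mulVec (z ω) i + b i - s ω i) ^ 2 ∂P ≥
        (M : ℝ) - c ^ 2 * (∑ m, g m / h m) ^ 2 * (S * R⁻¹ * S).trace := by
  intro K b
  have : Nonempty (Fin M) := ⟨⟨0, hM⟩⟩
  have hγ : IsWhiteFamily γ S P := isWhiteFamily_input hindep hγL2 hγcent hScov
  have hV := isWhiteFamily_col_artificialNoise hindep hVL2 hVcent hVvar
  have hnz := crossCov_self_eq_smul_one_of_centered hnzL2 hnzcent hnzcov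
  have hsec := stmt18_general hγ hV hnzL2 (crossCov_input_col_artificialNoise hindep hγL2 hVL2)
    (crossCov_input_channelNoise hindep hγL2 hnzL2)
    (crossCov_col_artificialNoise_channelNoise hindep hVL2 hnzL2)
    (fun m => c * (g m / h m)) (A *ᵥ g) (z := z) hs
    (fun ω => by simp only [hz ω, Finset.smul_sum, smul_smul])
    (R := R) (by simp only [hR, hnz, add_smul, Finset.mul_sum, mul_pow, div_pow])
    (hR ▸ hγ.isUnit_smul_add_smul_one (by positivity) hAgpos) K b
  simpa [htr, ← Finset.mul_sum, mul_pow] using hsec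
end
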